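/- Let G be a strongly connected countable directed graph with finite Gurevich entropy h(G), let v be a vertex of G, and set L = limsup_n (lⁿ_{vv}(G))^{1/n}. The following are equivalent: (i) L > 0 and Σ_{n≥1} lⁿ_{vv}(G) L^{−n} = 1; (ii) G is recurrent and L = e^{h(G)}. -/

import Mathlib

open scoped ENNReal NNReal Classical
open Filter MeasureTheory

/-- A countable directed graph: countable sets of vertices and edges with
source and range maps. -/
structure DirGraph where
  V : Type
  E : Type
  countV : Countable V
  countE : Countable E
  s : E → V
  r : E → V

namespace DirGraph

attribute [instance] countV countE

variable (G : DirGraph)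

/-- `μ` is a finite path (a vertex counts as the empty path). -/
def IsPath (μ : List G.E) : Prop := μ.Chain' (fun e f => G.r e = G.s f)

/-- `μ` is a finite path from `u` to `w`. -/
def IsPathFrom (μ : List G.E) (u w : G.V) : Prop :=
  G.IsPath μ ∧ (∀ e ∈ μ.head?, G.s e = u) ∧ (∀ e ∈ μ.getLast?, G.r e = w) ∧ (μ = [] → u = w)

/-- A function `F : E → ℝ` extended to finite paths. -/
def Fsum (F : G.E → ℝ) (μ : List G.E) : ℝ := (μ.map F).sum

/-- The matrix `A(β)` over the vertices, with entries in `[0,∞]`: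
`A(β)_{uw} = Σ_{e : u → w} e^{-β F(e)}`. -/
noncomputable def Amat (F : G.E → ℝ) (β : ℝ) (u w : G.V) : ℝ≥0∞ :=
  ∑' e : {e : G.E // G.s e = u ∧ G.r e = w}, ENNReal.ofReal (Real.exp (-β * F e.1))

/-- The powers of the matrix `A(β)`, defined recursively; `A(β)⁰` is the identity matrix. -/
noncomputable def Apow (F : G.E → ℝ) (β : ℝ) : ℕ → G.V → G.V → ℝ≥0∞
  | 0, u, w => if u = w then 1 else 0
  | n + 1, u, w => ∑' x : G.V, G.Amat F β u x * Apow F β n x w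

/-- A sink is a vertex emitting no edges. -/
def IsSink (v : G.V) : Prop := ∀ e : G.E, G.s e ≠ v

/-- An infinite emitter is a vertex emitting infinitely many edges. -/
def InfEmitter (v : G.V) : Prop := {e : G.E | G.s e = v}.Infinite

/-- A set of vertices is hereditary when it is closed under following edges. -/
def Hereditary (H : Set G.V) : Prop := ∀ e : G.E, G.s e ∈ H → G.r e ∈ H

/-- A set of vertices `H` is saturated when every vertex of `V ∖ V∞` all of whose
successors lie in `H` belongs to `H`. -/
def Saturated (H : Set G.V) : Prop :=
  ∀ v : G.V, ¬ G.IsSink v → ¬ G.InfEmitter v → (∀ e : G.E, G.s e = v → G.r e ∈ H) → v ∈ H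

/-- `G` is cofinal when the only nonempty hereditary and saturated set of
vertices is the whole vertex set. -/
def Cofinal : Prop :=
  ∀ H : Set G.V, H.Nonempty → G.Hereditary H → G.Saturated H → H = Set.univ

/-- The set of non-wandering vertices: those lying on a loop of length ≥ 1. -/
def NW : Set G.V := {v | ∃ μ : List G.E, μ ≠ [] ∧ G.IsPathFrom μ v v}

/-- `G` is strongly connected when there is a finite path between any two vertices. -/
def StronglyConnected : Prop := ∀ u w : G.V, ∃ μ : List G.E, G.IsPathFrom μ u w

/-- `G` is row-finite when every vertex emits only finitely many edges. -/
def RowFinite : Prop := ∀ v : G.V, {e : G.E | G.s e = v}.Finite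

/-- `ψ` is an `A(β)`-harmonic vector. -/
def Harmonic (F : G.E → ℝ) (β : ℝ) (ψ : G.V → ℝ≥0) : Prop :=
  ∀ v : G.V, ∑' w : G.V, G.Amat F β v w * ψ w = (ψ v : ℝ≥0∞)

/-- `A(β)` is transient when `Σ_n A(β)ⁿ_{vv} < ∞` for every vertex. -/
def Transient (F : G.E → ℝ) (β : ℝ) : Prop :=
  ∀ v : G.V, ∑' n : ℕ, G.Apow F β n v v ≠ ⊤

/-- `A(β)` is recurrent when `Σ_n A(β)ⁿ_{vv} = ∞` for some vertex. -/
def Recurrent (F : G.E → ℝ) (β : ℝ) : Prop :=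
  ∃ v : G.V, ∑' n : ℕ, G.Apow F β n v v = ⊤

/-- An exit path: a sequence of vertices joined by edges which leaves every
finite set of vertices. -/
def IsExitPath (t : ℕ → G.V) : Prop :=
  (∀ i : ℕ, ∃ e : G.E, G.s e = t i ∧ G.r e = t (i + 1)) ∧
  ∀ M : Set G.V, M.Finite → ∃ N : ℕ, ∀ i : ℕ, N ≤ i → t i ∉ M

/-- Tail equivalence of vertex sequences. -/
def TailEquiv (t t' : ℕ → G.V) : Prop :=
  ∃ k : ℤ, ∃ N : ℕ, ∀ i : ℕ, N ≤ i → 0 ≤ (i : ℤ) + k ∧ t ((i : ℤ) + k).toNat = t' i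

/-- A simple loop based at `v`: a loop which returns to `v` only at the very end. -/
def IsSimpleLoop (v : G.V) (μ : List G.E) : Prop :=
  μ ≠ [] ∧ G.IsPathFrom μ v v ∧
  ∀ (i : ℕ) (h : i + 1 < μ.length), G.r (μ.get ⟨i, Nat.lt_of_succ_lt h⟩) ≠ v

/-- `lⁿ_{vv}(β)`: the weighted number of simple loops of length `n` based at `v`. -/
noncomputable def loopSum (F : G.E → ℝ) (β : ℝ) (v : G.V) (n : ℕ) : ℝ≥0∞ :=
  ∑' μ : {μ : List G.E // μ.length = n ∧ G.IsSimpleLoop v μ},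
    ENNReal.ofReal (Real.exp (-β * G.Fsum F μ.1))

/-- The space `P(G)` of infinite paths in `G`. -/
def PathSpace : Type := {p : ℕ → G.E // ∀ i : ℕ, G.r (p i) = G.s (p (i + 1))}

/-- The Borel σ-algebra of `P(G)` as a subspace of the product `E^ℕ` with `E`
discrete (for a countable discrete space, the Borel σ-algebra is the power set). -/
instance : MeasurableSpace G.PathSpace :=
  letI : MeasurableSpace G.E := ⊤
  inferInstanceAs (MeasurableSpace {p : ℕ → G.E // ∀ i : ℕ, G.r (p i) = G.s (p (i + 1))})

/-- The cylinder set `Z'(v)` of infinite paths starting at the vertex `v`. -/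
def cylV (v : G.V) : Set G.PathSpace := {p | G.s (p.1 0) = v}

/-- The cylinder set `Z'(μ)` of infinite paths beginning with the finite path `μ`. -/
def cylP (μ : List G.E) : Set G.PathSpace :=
  {p | ∀ (i : ℕ) (h : i < μ.length), p.1 i = μ.get ⟨i, h⟩}

/-- The set `P(G)_wan` of wandering infinite paths: those visiting each vertex
only finitely many times. -/
def wanSet : Set G.PathSpace := {p | ∀ v : G.V, {i : ℕ | G.s (p.1 i) = v}.Finite}

end DirGraph

namespace DirGraph

/-- adjacency matrix -/
noncomputable abbrev adj (G : DirGraph) (u w : G.V) : ℝ≥0∞ := G.Amat (fun _ => 0) 0 u w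

/-- number of paths -/
noncomputable abbrev pw (G : DirGraph) (n : ℕ) (u w : G.V) : ℝ≥0∞ := G.Apow (fun _ => 0) 0 n u w

theorem adj_eq (G : DirGraph) (u w : G.V) :
    G.adj u w = ∑' _e : {e : G.E // G.s e = u ∧ G.r e = w}, (1 : ℝ≥0∞) := by
  simp [adj, Amat]

theorem pw_zero (G : DirGraph) (u w : G.V) : G.pw 0 u w = if u = w then 1 else 0 := rfl

theorem pw_succ (G : DirGraph) (n : ℕ) (u w : G.V) :
    G.pw (n + 1) u w = ∑' x : G.V, G.adj u x * G.pw n x w := rfl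

theorem pw_add (G : DirGraph) (m n : ℕ) (u w : G.V) :
    G.pw (m + n) u w = ∑' x : G.V, G.pw m u x * G.pw n x w := by
  induction m generalizing u with
  | zero =>
    simp only [pw_zero, Nat.zero_add]
    rw [tsum_eq_single u]
    · simp
    · intro b hb
      simp [hb.symm]
  | succ m ih =>
    rw [show m + 1 + n = (m + n) + 1 by omega, pw_succ]
    simp_rw [ih, pw_succ, ← ENNReal.tsum_mul_left, ← ENNReal.tsum_mul_right]
    rw [ENNReal.tsum_comm]
    simp_rw [mul_assoc]

theorem pw_mul_le (G : DirGraph) (m n : ℕ) (u x w : G.V) :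
    G.pw m u x * G.pw n x w ≤ G.pw (m + n) u w := by
  rw [pw_add]
  exact ENNReal.le_tsum (f := fun x => G.pw m u x * G.pw n x w) x

theorem one_le_adj (G : DirGraph) (e : G.E) : 1 ≤ G.adj (G.s e) (G.r e) := by
  rw [adj_eq]
  exact ENNReal.le_tsum (f := fun _ : {f : G.E // G.s f = G.s e ∧ G.r f = G.r e} => (1 : ℝ≥0∞))
    ⟨e, rfl, rfl⟩

theorem isPath_single (G : DirGraph) (e : G.E) : G.IsPath [e] := List.isChain_singleton e

theorem isPath_cons_cons (G : DirGraph) (e f : G.E) (t : List G.E) :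
    G.IsPath (e :: f :: t) ↔ G.r e = G.s f ∧ G.IsPath (f :: t) := List.isChain_cons_cons

theorem one_le_pw (G : DirGraph) (μ : List G.E) (u w : G.V) (hμ : G.IsPathFrom μ u w) :
    1 ≤ G.pw μ.length u w := by
  induction μ generalizing u with
  | nil =>
    have := hμ.2.2.2 rfl
    simp [pw_zero, this]
  | cons e t ih =>
    obtain ⟨h1, h2, h3, h4⟩ := hμ
    have hs : G.s e = u := h2 e (by simp)
    subst hs
    have ht : G.IsPathFrom t (G.r e) w := by
      refine ⟨?_, ?_, ?_, ?_⟩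
      · exact List.IsChain.tail h1
      · intro f hf
        cases t with
        | nil => simp at hf
        | cons a t =>
          simp at hf
          subst hf
          have := h1
          rw [isPath_cons_cons] at this
          exact this.1.symm
      · intro f hf
        cases t with
        | nil => simp at hf
        | cons a t =>
          apply h3
          simpa using hf
      · rintro rfl
        exact h3 e (by simp)
    have h5 := ih _ ht
    rw [List.length_cons, pw_succ]
    refine le_trans ?_ (ENNReal.le_tsum (G.r e))
    calc (1 : ℝ≥0∞) = 1 * 1 := by simp
      _ ≤ _ := mul_le_mul' (G.one_le_adj e) h5

/-- first-passage paths -/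
def FP (G : DirGraph) (v : G.V) : G.V → List G.E → Prop
  | _, [] => False
  | u, [e] => G.s e = u ∧ G.r e = v
  | u, e :: f :: t => G.s e = u ∧ G.r e ≠ v ∧ FP G v (G.r e) (f :: t)

theorem FP_iff (G : DirGraph) (v : G.V) (u : G.V) (μ : List G.E) :
    G.FP v u μ ↔ (μ ≠ [] ∧ G.IsPathFrom μ u v ∧
      ∀ (i : ℕ) (h : i + 1 < μ.length), G.r (μ.get ⟨i, Nat.lt_of_succ_lt h⟩) ≠ v) := by
  induction μ generalizing u with
  | nil => simp [FP]
  | cons e t ih =>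
    cases t with
    | nil => simp [FP, IsPathFrom, isPath_single]
    | cons f t =>
      simp only [FP, ih]
      constructor
      · rintro ⟨h1, h2, -, ⟨h3, h4, h5, h6⟩, h7⟩
        refine ⟨by simp, ⟨?_, by simpa using h1, by simpa using h5, by simp⟩, ?_⟩
        · rw [isPath_cons_cons]
          exact ⟨(h4 f (by simp)).symm, h3⟩
        · intro i hi
          cases i with
          | zero => simpa using h2
          | succ i => exact h7 i (by simpa using hi)
      · rintro ⟨-, ⟨h3, h4, h5, h6⟩, h7⟩
        rw [isPath_cons_cons] at h3
        refine ⟨h4 e (by simp), h7 0 (by simp), by simp, ⟨h3.2, ?_, by simpa using h5, by simp⟩, ?_⟩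
        · simpa using h3.1.symm
        · intro i hi
          exact h7 (i + 1) (by simpa using hi)

/-- count of first-passage paths of length n -/
noncomputable def fp (G : DirGraph) (v : G.V) (n : ℕ) (u : G.V) : ℝ≥0∞ :=
  ∑' _μ : {μ : List G.E // μ.length = n ∧ G.FP v u μ}, (1 : ℝ≥0∞)

theorem loopSum_eq (G : DirGraph) (v : G.V) (n : ℕ) :
    G.loopSum (fun _ => 0) 0 v n = G.fp v n v := by
  have : ∀ μ, G.IsSimpleLoop v μ ↔ G.FP v v μ := fun μ => by rw [FP_iff, IsSimpleLoop]
  unfold loopSum fp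
  simp only [neg_zero, zero_mul, Real.exp_zero, ENNReal.ofReal_one]
  exact Equiv.tsum_eq (Equiv.subtypeEquivRight (fun μ => by rw [this]))
    (fun _ : {μ : List G.E // μ.length = n ∧ G.FP v v μ} => (1 : ℝ≥0∞))

theorem fp_one (G : DirGraph) (v u : G.V) : G.fp v 1 u = G.adj u v := by
  rw [adj_eq, fp]
  let φ : {e : G.E // G.s e = u ∧ G.r e = v} ≃ {μ : List G.E // μ.length = 1 ∧ G.FP v u μ} :=
    Equiv.ofBijective (fun e => ⟨[e.1], by simp, by simpa [FP] using e.2⟩) (by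
      constructor
      · intro a b hab
        simpa [Subtype.ext_iff] using hab
      · rintro ⟨μ, h1, h2⟩
        obtain ⟨e, rfl⟩ := List.length_eq_one_iff.1 h1
        exact ⟨⟨e, by simpa [FP] using h2⟩, rfl⟩)
  exact (Equiv.tsum_eq φ (fun _ => (1 : ℝ≥0∞))).symm

theorem fp_succ (G : DirGraph) (v : G.V) (n : ℕ) (u : G.V) :
    G.fp v (n + 2) u = ∑' x : G.V, G.adj u x * (if x = v then 0 else G.fp v (n + 1) x) := by
  let φ : (Σ x : G.V, {e : G.E // G.s e = u ∧ G.r e = x} ×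
      {μ : List G.E // x ≠ v ∧ μ.length = n + 1 ∧ G.FP v x μ}) ≃
      {μ : List G.E // μ.length = n + 2 ∧ G.FP v u μ} :=
    Equiv.ofBijective (fun p => ⟨p.2.1.1 :: p.2.2.1, by
      obtain ⟨x, ⟨e, he1, he2⟩, ⟨μ, h1, h2, h3⟩⟩ := p
      subst he2
      cases μ with
      | nil => simp at h2
      | cons f t => exact ⟨by simpa using h2, he1, h1, h3⟩⟩) (by
      constructor
      · rintro ⟨x, ⟨e, he1, he2⟩, ⟨μ, h1⟩⟩ ⟨x', ⟨e', he1', he2'⟩, ⟨μ', h1'⟩⟩ hab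
        simp only [Subtype.mk.injEq, List.cons.injEq] at hab
        obtain ⟨rfl, rfl⟩ := hab
        subst he2
        subst he2'
        rfl
      · rintro ⟨μ, h1, h2⟩
        match μ, h1, h2 with
        | [], h1, h2 => simp at h1
        | [e], h1, h2 => simp at h1
        | e :: f :: t, h1, h2 =>
          exact ⟨⟨G.r e, ⟨e, h2.1, rfl⟩, ⟨f :: t, h2.2.1, by simpa using h1, h2.2.2⟩⟩, rfl⟩)
  rw [fp, ← Equiv.tsum_eq φ (fun _ => (1 : ℝ≥0∞)), ENNReal.tsum_sigma']
  congr 1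
  funext x
  rw [ENNReal.tsum_prod']
  have : (∑' _μ : {μ : List G.E // x ≠ v ∧ μ.length = n + 1 ∧ G.FP v x μ}, (1 : ℝ≥0∞))
      = if x = v then 0 else G.fp v (n + 1) x := by
    split_ifs with hx
    · have : IsEmpty {μ : List G.E // x ≠ v ∧ μ.length = n + 1 ∧ G.FP v x μ} :=
        ⟨fun μ => μ.2.1 hx⟩
      simp
    · exact Equiv.tsum_eq (Equiv.subtypeEquivRight (fun μ => by simp [hx]))
        (fun _ : {μ : List G.E // μ.length = n + 1 ∧ G.FP v x μ} => (1 : ℝ≥0∞))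
  rw [this, adj_eq, ← ENNReal.tsum_mul_right]
  simp

theorem renewal (G : DirGraph) (v : G.V) (n : ℕ) (u : G.V) :
    G.pw (n + 1) u v = ∑ k ∈ Finset.range (n + 1), G.fp v (k + 1) u * G.pw (n - k) v v := by
  induction n generalizing u with
  | zero =>
    rw [pw_succ, tsum_eq_single v]
    · simp [pw_zero, fp_one]
    · intro b hb
      simp [pw_zero, hb]
  | succ n ih =>
    rw [Finset.sum_range_succ', pw_succ]
    simp only [Nat.zero_add, fp_one, fp_succ, Nat.sub_zero, Nat.add_sub_add_right]
    have key : ∀ x, G.adj u x * G.pw (n + 1) x v =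
        (∑ k ∈ Finset.range (n + 1), G.adj u x * (if x = v then 0 else G.fp v (k + 1) x)
          * G.pw (n - k) v v) + (if x = v then G.adj u v * G.pw (n + 1) v v else 0) := by
      intro x
      split_ifs with hx
      · subst hx
        simp
      · rw [ih, Finset.mul_sum]
        simp [mul_assoc]
    rw [tsum_congr key, ENNReal.tsum_add, tsum_ite_eq]
    congr 1
    rw [Summable.tsum_finsetSum (fun _ _ => ENNReal.summable)]
    simp_rw [ENNReal.tsum_mul_right]

theorem renewal_sum (G : DirGraph) (v : G.V) (t : ℝ≥0∞) :
    ∑' n, G.pw n v v * t ^ n =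
      1 + (∑' n, G.fp v (n + 1) v * t ^ (n + 1)) * ∑' n, G.pw n v v * t ^ n := by
  conv_lhs => rw [tsum_eq_zero_add' ENNReal.summable]
  congr 1
  · simp [pw_zero]
  · rw [← ENNReal.tsum_mul_right]
    simp_rw [← ENNReal.tsum_mul_left]
    rw [← ENNReal.tsum_prod, ← (Finset.HasAntidiagonal.sigmaAntidiagonalEquivProd (A := ℕ)).tsum_eq, ENNReal.tsum_sigma']
    congr 1
    funext n
    rw [tsum_fintype, renewal, Finset.sum_mul]
    simp only [Finset.HasAntidiagonal.sigmaAntidiagonalEquivProd_apply]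
    rw [Finset.sum_coe_sort (Finset.HasAntidiagonal.antidiagonal n)
      (fun p : ℕ × ℕ => G.fp v (p.1 + 1) v * t ^ (p.1 + 1) * (G.pw p.2 v v * t ^ p.2)),
      Finset.Nat.sum_antidiagonal_eq_sum_range_succ_mk]
    refine Finset.sum_congr rfl fun k hk => ?_
    have : n + 1 = (k + 1) + (n - k) := by
      have := Finset.mem_range.1 hk
      omega
    rw [this, pow_add]
    ring

theorem sum_lt_top (G : DirGraph) (v : G.V) (t : ℝ≥0∞)
    (hB : ∑' n, G.fp v (n + 1) v * t ^ (n + 1) < 1) : ∑' n, G.pw n v v * t ^ n ≠ ⊤ := by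
  set B := ∑' n, G.fp v (n + 1) v * t ^ (n + 1) with hBdef
  have hC : 1 + B * (1 - B)⁻¹ = (1 - B)⁻¹ := by
    have h1 : (1 - B) ≠ 0 := (tsub_pos_of_lt hB).ne'
    have h2 : (1 - B) ≠ ⊤ := ENNReal.sub_ne_top (by simp)
    have h3 := ENNReal.mul_inv_cancel h1 h2
    calc 1 + B * (1 - B)⁻¹ = (1 - B) * (1 - B)⁻¹ + B * (1 - B)⁻¹ := by rw [h3]
      _ = (1 - B)⁻¹ := by rw [← add_mul, tsub_add_cancel_of_le hB.le, one_mul]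
  have hfin : (1 - B)⁻¹ ≠ ⊤ := ENNReal.inv_ne_top.2 (tsub_pos_of_lt hB).ne'
  have key : ∀ N, ∑ n ∈ Finset.range N, G.pw n v v * t ^ n ≤ (1 - B)⁻¹ := by
    intro N
    induction N with
    | zero => simp
    | succ N ih =>
      rw [Finset.sum_range_succ', ← hC, add_comm]
      refine add_le_add (by simp [pw_zero]) ?_
      refine le_trans ?_ (mul_le_mul_right ih B)
      rw [hBdef, ← ENNReal.tsum_mul_right]
      refine le_trans ?_ (ENNReal.sum_le_tsum (Finset.range N))
      calc ∑ n ∈ Finset.range N, G.pw (n + 1) v v * t ^ (n + 1)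
          = ∑ n ∈ Finset.range N, ∑ k ∈ Finset.range (n + 1),
            (G.fp v (k + 1) v * t ^ (k + 1)) * (G.pw (n - k) v v * t ^ (n - k)) := by
            refine Finset.sum_congr rfl fun n _ => ?_
            rw [renewal, Finset.sum_mul]
            refine Finset.sum_congr rfl fun k hk => ?_
            have : n + 1 = (k + 1) + (n - k) := by
              have := Finset.mem_range.1 hk
              omega
            rw [this, pow_add]
            ring
        _ = ∑ k ∈ Finset.range N, ∑ j ∈ Finset.range (N - k),
            (G.fp v (k + 1) v * t ^ (k + 1)) * (G.pw j v v * t ^ j) :=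
            Finset.sum_range_diag_flip N
              (fun k j => (G.fp v (k + 1) v * t ^ (k + 1)) * (G.pw j v v * t ^ j))
        _ ≤ _ := by
            refine Finset.sum_le_sum fun k _ => ?_
            rw [← Finset.mul_sum]
            refine mul_le_mul_right (Finset.sum_le_sum_of_subset ?_) _
            intro j hj
            simp at hj ⊢
            omega
  refine ne_top_of_le_ne_top hfin ?_
  rw [ENNReal.tsum_eq_iSup_nat]
  exact iSup_le key

theorem fp_le_pw (G : DirGraph) (v : G.V) (n : ℕ) : G.fp v (n + 1) v ≤ G.pw (n + 1) v v := by
  rw [renewal]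
  refine le_trans ?_ (Finset.single_le_sum (fun _ _ => zero_le)
    (Finset.mem_range.2 (Nat.lt_succ_self n)))
  simp [pw_zero]

theorem Apow_one (G : DirGraph) (h : ℝ) (n : ℕ) (u w : G.V) :
    G.Apow (fun _ => 1) h n u w = G.pw n u w * (ENNReal.ofReal (Real.exp h))⁻¹ ^ n := by
  have hA : ∀ u w, G.Amat (fun _ => 1) h u w = (ENNReal.ofReal (Real.exp h))⁻¹ * G.adj u w := by
    intro u w
    rw [adj_eq, ← ENNReal.tsum_mul_left, Amat]
    simp [Real.exp_neg, ENNReal.ofReal_inv_of_pos (Real.exp_pos h)]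
  induction n generalizing u with
  | zero => simp [Apow, pw_zero]
  | succ n ih =>
    rw [Apow, pw_succ, ← ENNReal.tsum_mul_right]
    simp_rw [ih, hA, pow_succ]
    congr 1
    funext x
    ring

end DirGraph

theorem limsup_le_of_sum (a : ℕ → ℝ≥0∞) (r : ℝ≥0∞) (hr : r ≠ ⊤) (hr0 : r ≠ 0)
    (hs : ∑' n, a n * r⁻¹ ^ n ≠ ⊤) :
    limsup (fun n : ℕ => a n ^ ((n : ℝ)⁻¹)) atTop ≤ r := by
  have h0 := ENNReal.tendsto_atTop_zero_of_tsum_ne_top hs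
  have h1 : ∀ᶠ n in atTop, a n * r⁻¹ ^ n ≤ 1 := by
    filter_upwards [h0.eventually (gt_mem_nhds (show (0 : ℝ≥0∞) < 1 by simp))] with n hn
    exact hn.le
  refine limsup_le_of_le (by isBoundedDefault) ?_
  filter_upwards [h1, eventually_gt_atTop 0] with n hn hn0
  have h2 : a n ≤ r ^ n := by
    rw [← ENNReal.inv_pow, ← div_eq_mul_inv] at hn
    rw [ENNReal.div_le_iff (pow_ne_zero _ hr0) (ENNReal.pow_ne_top hr)] at hn
    simpa using hn
  calc a n ^ ((n : ℝ)⁻¹) ≤ (r ^ n) ^ ((n : ℝ)⁻¹) := ENNReal.rpow_le_rpow h2 (by positivity)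
    _ = r := ENNReal.pow_rpow_inv_natCast hn0.ne' r

theorem sum_of_limsup_lt (a : ℕ → ℝ≥0∞) (r : ℝ≥0∞) (hr : r ≠ ⊤) (ha : ∀ n, a n ≠ ⊤)
    (h : limsup (fun n : ℕ => a n ^ ((n : ℝ)⁻¹)) atTop < r) :
    ∑' n, a n * r⁻¹ ^ n ≠ ⊤ := by
  obtain ⟨c, hc1, hc2⟩ := exists_between h
  have hev := eventually_lt_of_limsup_lt hc1
  have hr0 : r ≠ 0 := (lt_of_le_of_lt zero_le h).ne'
  obtain ⟨N, hN⟩ := eventually_atTop.1 (hev.and (eventually_gt_atTop 0))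
  rw [← ENNReal.summable.sum_add_tsum_nat_add' (k := N)]
  refine ENNReal.add_ne_top.2 ⟨?_, ?_⟩
  · refine ENNReal.sum_ne_top.2 fun n _ => ENNReal.mul_ne_top (ha n) (ENNReal.pow_ne_top ?_)
    simpa using hr0
  · have hq : c * r⁻¹ < 1 := by
      rw [← div_eq_mul_inv]
      exact ENNReal.div_lt_of_lt_mul (by simpa using hc2)
    refine ne_top_of_le_ne_top (b := ∑' n, (c * r⁻¹) ^ n) ?_ ?_
    · rw [ENNReal.tsum_geometric]
      exact ENNReal.inv_ne_top.2 (tsub_pos_of_lt hq).ne'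
    · refine le_trans (ENNReal.tsum_le_tsum fun n => ?_)
        (ENNReal.tsum_comp_le_tsum_of_injective (add_left_injective N) (fun n => (c * r⁻¹) ^ n))
      obtain ⟨h1, h2⟩ := hN (n + N) (by omega)
      rw [mul_pow]
      refine mul_le_mul_left ?_ _
      have := ENNReal.rpow_le_rpow h1.le (show (0 : ℝ) ≤ ((n + N : ℕ) : ℝ) by positivity)
      rw [← ENNReal.rpow_mul, inv_mul_cancel₀ (by positivity)] at this
      simpa only [ENNReal.rpow_one, ENNReal.rpow_natCast] using this

theorem DirGraph.pw_ne_top (G : DirGraph) (v : G.V) (c : ℝ≥0∞) (hc : c ≠ ⊤)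
    (h : limsup (fun n : ℕ => G.pw n v v ^ ((n : ℝ)⁻¹)) atTop = c) (n : ℕ) :
    G.pw n v v ≠ ⊤ := by
  intro hn
  have hn0 : n ≠ 0 := by
    rintro rfl
    simp [DirGraph.pw_zero] at hn
  have hk : ∀ k, G.pw ((k + 1) * n) v v = ⊤ := by
    intro k
    induction k with
    | zero => simpa using hn
    | succ k ih =>
      have := G.pw_mul_le ((k + 1) * n) n v v v
      rw [ih, hn, ENNReal.top_mul_top, top_le_iff] at this
      rw [← this]
      congr 1
      ring
  have : (⊤ : ℝ≥0∞) ≤ limsup (fun n : ℕ => G.pw n v v ^ ((n : ℝ)⁻¹)) atTop := by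
    refine le_limsup_of_frequently_le ?_ (by isBoundedDefault)
    rw [frequently_atTop]
    intro N
    have hpos : 0 < n := Nat.pos_of_ne_zero hn0
    refine ⟨(N + 1) * n, by nlinarith, ?_⟩
    show (⊤ : ℝ≥0∞) ≤ G.pw ((N + 1) * n) v v ^ _
    rw [hk, ENNReal.top_rpow_of_pos]
    positivity
  rw [h] at this
  exact hc (top_le_iff.1 this)

/-- characterization of recurrence with `L = e^{h(G)}` in terms of
simple loops (the gauge case `F = 1`, so that `A(β)ⁿ_{vw} = Aⁿ_{vw} e^{-nβ}` and the
matrix `A(0)` with `F = 0` is the adjacency matrix). -/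
theorem stmt_14 (G : DirGraph) (hSC : G.StronglyConnected) (h : ℝ)
    (hent : ∀ u : G.V,
      Filter.limsup (fun n : ℕ => (G.Apow (fun _ => 0) 0 n u u) ^ ((n : ℝ)⁻¹)) Filter.atTop
        = ENNReal.ofReal (Real.exp h))
    (v : G.V) (L : ℝ≥0∞)
    (hL : L = Filter.limsup
      (fun n : ℕ => (G.loopSum (fun _ => 0) 0 v n) ^ ((n : ℝ)⁻¹)) Filter.atTop) :
    (0 < L ∧ ∑' n : ℕ, G.loopSum (fun _ => 0) 0 v (n + 1) * L⁻¹ ^ (n + 1) = 1) ↔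
      (G.Recurrent (fun _ => 1) h ∧ L = ENNReal.ofReal (Real.exp h)) := by
  set R := ENNReal.ofReal (Real.exp h) with hR
  have hRt : R ≠ ⊤ := ENNReal.ofReal_ne_top
  have hR0 : R ≠ 0 := by
    rw [hR]
    simpa using Real.exp_pos h
  have hent' : ∀ u, limsup (fun n : ℕ => G.pw n u u ^ ((n : ℝ)⁻¹)) atTop = R := hent
  have hfin := fun u => G.pw_ne_top u R hRt (hent' u)
  simp_rw [DirGraph.loopSum_eq] at hL ⊢
  have hrec : G.Recurrent (fun _ => 1) h ↔ ∑' n, G.pw n v v * R⁻¹ ^ n = ⊤ := by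
    unfold DirGraph.Recurrent
    simp_rw [DirGraph.Apow_one, ← hR]
    refine ⟨?_, fun H => ⟨v, H⟩⟩
    rintro ⟨u, hu⟩
    obtain ⟨μ, hμ⟩ := hSC v u
    obtain ⟨ν, hν⟩ := hSC u v
    have h1 := G.one_le_pw μ v u hμ
    have h2 := G.one_le_pw ν u v hν
    set m := μ.length
    set k := ν.length
    rw [← top_le_iff]
    have hRi : R⁻¹ ^ (m + k) ≠ 0 := pow_ne_zero _ (by simpa using hRt)
    calc ⊤ = (∑' n, G.pw n u u * R⁻¹ ^ n) * R⁻¹ ^ (m + k) := by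
          rw [hu, ENNReal.top_mul hRi]
      _ = ∑' n, G.pw n u u * R⁻¹ ^ (n + (m + k)) := by
          rw [← ENNReal.tsum_mul_right]
          simp_rw [pow_add, mul_assoc]
      _ ≤ ∑' n, G.pw (n + (m + k)) v v * R⁻¹ ^ (n + (m + k)) := by
          refine ENNReal.tsum_le_tsum fun n => mul_le_mul_left ?_ _
          calc G.pw n u u = 1 * G.pw n u u * 1 := by simp
            _ ≤ G.pw m v u * G.pw n u u * G.pw k u v := by gcongr
            _ ≤ G.pw (m + n) v u * G.pw k u v := mul_le_mul_left (G.pw_mul_le _ _ _ _ _) _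
            _ ≤ G.pw (m + n + k) v v := G.pw_mul_le _ _ _ _ _
            _ = _ := by rw [show m + n + k = n + (m + k) by omega]
      _ ≤ _ := ENNReal.tsum_comp_le_tsum_of_injective (add_left_injective (m + k))
          (fun n => G.pw n v v * R⁻¹ ^ n)
  rw [hrec]
  have hLR : L ≤ R := by
    rw [hL, ← hent' v]
    refine limsup_le_limsup ?_ (by isBoundedDefault) (by isBoundedDefault)
    filter_upwards [eventually_gt_atTop 0] with n hn
    obtain ⟨n, rfl⟩ := Nat.exists_eq_succ_of_ne_zero hn.ne'
    exact ENNReal.rpow_le_rpow (G.fp_le_pw v n) (by positivity)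
  constructor
  · rintro ⟨hL0, hB⟩
    have hLt : L ≠ ⊤ := ne_top_of_le_ne_top hRt hLR
    have hRL : R ≤ L := by
      refine le_of_forall_gt_imp_ge_of_dense fun r hr => ?_
      rcases eq_or_ne r ⊤ with rfl | hrt
      · exact le_top
      have hr0 : r ≠ 0 := (hL0.trans hr).ne'
      rw [← hent' v]
      refine limsup_le_of_sum _ r hrt hr0 (G.sum_lt_top v _ ?_)
      have hq : L * r⁻¹ < 1 := by
        rw [← div_eq_mul_inv]
        exact ENNReal.div_lt_of_lt_mul (by simpa using hr)
      refine lt_of_le_of_lt ?_ hq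
      calc ∑' n, G.fp v (n + 1) v * r⁻¹ ^ (n + 1)
          ≤ ∑' n, (L * r⁻¹) * (G.fp v (n + 1) v * L⁻¹ ^ (n + 1)) := by
            refine ENNReal.tsum_le_tsum fun n => ?_
            have e : r⁻¹ = (L * r⁻¹) * L⁻¹ := by
              rw [mul_comm L, mul_assoc, ENNReal.mul_inv_cancel hL0.ne' hLt, mul_one]
            have e2 : r⁻¹ ^ (n + 1) ≤ (L * r⁻¹) * L⁻¹ ^ (n + 1) := by
              conv_lhs => rw [e, mul_pow]
              refine mul_le_mul_left ?_ _
              exact pow_le_of_le_one zero_le hq.le (by omega)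
            calc _ ≤ G.fp v (n + 1) v * ((L * r⁻¹) * L⁻¹ ^ (n + 1)) := mul_le_mul_right e2 _
              _ = _ := by ring
        _ = L * r⁻¹ := by rw [ENNReal.tsum_mul_left, hB, mul_one]
    have hEq : L = R := le_antisymm hLR hRL
    refine ⟨?_, hEq⟩
    rw [hEq] at hB
    have := G.renewal_sum v R⁻¹
    rw [hB, one_mul] at this
    by_contra hne
    have h3 := ENNReal.lt_add_right hne (one_ne_zero)
    rw [add_comm, ← this] at h3
    exact lt_irrefl _ h3
  · rintro ⟨hA, hLe⟩
    rw [hLe]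
    refine ⟨pos_iff_ne_zero.2 hR0, le_antisymm ?_ ?_⟩
    · have hlt : ∀ t, t < R⁻¹ → ∑' n, G.fp v (n + 1) v * t ^ (n + 1) ≤ 1 := by
        intro t ht
        rcases eq_or_ne t 0 with rfl | ht0
        · simp
        have h4 := sum_of_limsup_lt (fun n => G.pw n v v) t⁻¹ (by simpa using ht0) (hfin v)
          (by rw [hent' v]; exact ENNReal.lt_inv_iff_lt_inv.1 ht)
        rw [inv_inv] at h4
        by_contra! hB
        have h5 := G.renewal_sum v t
        have h6 : ∑' n, G.pw n v v * t ^ n + 1 ≤ ∑' n, G.pw n v v * t ^ n := by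
          conv_rhs => rw [h5]
          rw [add_comm]
          refine add_le_add le_rfl ?_
          calc _ = 1 * ∑' n, G.pw n v v * t ^ n := by rw [one_mul]
            _ ≤ _ := mul_le_mul_left hB.le _
        exact absurd (ENNReal.lt_add_right h4 one_ne_zero) (not_lt.2 h6)
      rw [ENNReal.tsum_eq_iSup_nat]
      refine iSup_le fun N => ?_
      have hRi : R⁻¹ ≠ 0 := by simpa using hRt
      have : (nhdsWithin R⁻¹ (Set.Iio R⁻¹)).NeBot := nhdsLT_neBot_of_exists_lt ⟨0, pos_iff_ne_zero.2 hRi⟩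
      have ht : Tendsto (fun t : ℝ≥0∞ => ∑ n ∈ Finset.range N, G.fp v (n + 1) v * t ^ (n + 1))
          (nhdsWithin R⁻¹ (Set.Iio R⁻¹))
          (nhds (∑ n ∈ Finset.range N, G.fp v (n + 1) v * R⁻¹ ^ (n + 1))) := by
        refine tendsto_finsetSum _ fun n _ => ?_
        refine ENNReal.Tendsto.const_mul ?_ (Or.inl (pow_ne_zero _ hRi))
        exact ((ENNReal.continuous_pow (n + 1)).tendsto _).mono_left nhdsWithin_le_nhds
      refine le_of_tendsto ht ?_
      filter_upwards [self_mem_nhdsWithin] with t ht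
      exact (ENNReal.sum_le_tsum _).trans (hlt t ht)
    · by_contra! hB
      exact G.sum_lt_top v _ hB hA
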